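/- Fix integers d ≥ 1 and p ≥ 1, let σ satisfy Assumption A, let f ∈ Π_p(ℝ^d), and let U ⊊ ℝ^d be a set whose complement U^c = ℝ^d ∖ U is nonempty. Let F_int = {g ∈ Π_p(ℝ^d) : g(x) = f(x) for all x ∈ U^c} (a nonempty affine set containing f) and let p* = min{deg g : g ∈ F_int}. For every ε > 0 such that Φ(ε) is positive definite, let g_ε denote the unique minimizer over g ∈ F_int of the quadratic form ĝᵀ Φ(ε)^{−1} ĝ, where ĝ = (⟨g, χ_T⟩_{L²(γ_d)})_{T ∈ ℕ^d_{≤p}} is the vector of Hermite coefficients of g. Then there exist C > 0 and ε₀ > 0 such that for all ε ∈ (0, ε₀): Φ(ε) is positive definite, and for every integer k with p* < k ≤ p one has Σ_{T ∈ ℕ^d, |T| = k} ⟨g_ε, χ_T⟩_{L²(γ_d)}² ≤ C ε^{k − p*}. In particular, the L²(γ_d)-distance from g_ε to Π_{p*}(ℝ^d) tends to 0 as ε → 0. -/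

import Mathlib

open MeasureTheory ProbabilityTheory

/-- The standard Gaussian measure `N(0, I_d)` on `ℝ^d`. -/
noncomputable def gaussD (d : ℕ) : Measure (Fin d → ℝ) :=
  Measure.pi fun _ => gaussianReal 0 1

/-- The normalized (probabilists') Hermite polynomial `H_t = He_t / √(t!)` evaluated at `y`. -/
noncomputable def hermN (t : ℕ) (y : ℝ) : ℝ :=
  (Polynomial.aeval y (Polynomial.hermite t)) / Real.sqrt (Nat.factorial t)

/-- The multivariate Hermite polynomial `χ_T(x) = ∏ i, H_{T i}(x i)`. -/
noncomputable def chiH {d : ℕ} (T : Fin d → ℕ) (x : Fin d → ℝ) : ℝ :=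
  ∏ i, hermN (T i) (x i)

/-- The Hermite coefficient `φ̂_{w,b}(T) = ∫ σ(⟨w,x⟩ + b) χ_T(x) dγ_d(x)`
of the random feature `φ_{w,b}(x) = σ(⟨w,x⟩ + b)`. -/
noncomputable def phiHat (d : ℕ) (σ : ℝ → ℝ) (w : Fin d → ℝ) (b : ℝ)
    (T : Fin d → ℕ) : ℝ :=
  ∫ x, σ (∑ i, w i * x i + b) * chiH T x ∂(gaussD d)

/-- The law of a feature pair `(w, b)` with `w ∼ N(0, v I_d)` and `b ∼ N(0, v)` independent. -/
noncomputable def featMeas (d : ℕ) (v : NNReal) : Measure ((Fin d → ℝ) × ℝ) :=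
  (Measure.pi fun _ : Fin d => gaussianReal 0 v).prod (gaussianReal 0 v)

/-- The index set `ℕ^d_{≤p}` of multi-indices of total degree at most `p`
(each coordinate then being at most `p`, so we may record it in `Fin (p+1)`). -/
abbrev MIdx (d p : ℕ) := {T : Fin d → Fin (p + 1) // (∑ i, (T i : ℕ)) ≤ p}

/-- The multi-index in `ℕ^d` corresponding to an element of `MIdx d p`. -/
def MIdx.toFun {d p : ℕ} (T : MIdx d p) : Fin d → ℕ := fun i => (T.1 i : ℕ)

/-- The matrix `Φ(ε)` with entries `Φ(ε)_{T,T'} = E_{w,b}[φ̂_{w,b}(T) φ̂_{w,b}(T')]`,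
where `w ∼ N(0, ε I_d)` and `b ∼ N(0, ε)` are independent. -/
noncomputable def PhiMat (d p : ℕ) (σ : ℝ → ℝ) (ε : ℝ) :
    Matrix (MIdx d p) (MIdx d p) ℝ := fun T T' =>
  ∫ wb : (Fin d → ℝ) × ℝ,
    phiHat d σ wb.1 wb.2 T.toFun * phiHat d σ wb.1 wb.2 T'.toFun
      ∂(featMeas d ε.toNNReal)

/-- The vector of Hermite coefficients `ĝ = (⟨g, χ_T⟩_{L²(γ_d)})_{T ∈ ℕ^d_{≤p}}`
of a polynomial `G`. -/
noncomputable def hermVec (d p : ℕ) (G : MvPolynomial (Fin d) ℝ) : MIdx d p → ℝ :=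
  fun T => ∫ x, MvPolynomial.eval x G * chiH T.toFun x ∂(gaussD d)

/-- The set `F_int` of polynomials of total degree at most `p` interpolating the
target `F` on `Uᶜ`. -/
def interpPolys (d p : ℕ) (U : Set (Fin d → ℝ)) (F : MvPolynomial (Fin d) ℝ) :
    Set (MvPolynomial (Fin d) ℝ) :=
  {G | G.totalDegree ≤ p ∧ ∀ x ∈ Uᶜ, MvPolynomial.eval x G = MvPolynomial.eval x F}

/-- `p*`: the minimal total degree over `F_int`. -/
noncomputable def minInterpDeg (d p : ℕ) (U : Set (Fin d → ℝ))
    (F : MvPolynomial (Fin d) ℝ) : ℕ :=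
  sInf {k : ℕ | ∃ G ∈ interpPolys d p U F, G.totalDegree = k}

open Matrix in
/-- The quadratic form `ĝᵀ Φ(ε)⁻¹ ĝ`. -/
noncomputable def quadForm (d p : ℕ) (σ : ℝ → ℝ) (ε : ℝ)
    (G : MvPolynomial (Fin d) ℝ) : ℝ :=
  hermVec d p G ⬝ᵥ ((PhiMat d p σ ε)⁻¹ *ᵥ hermVec d p G)

open Polynomial in
lemma gpoly_int (v : NNReal) (P : Polynomial ℝ) :
    Integrable (fun y => P.eval y) (gaussianReal 0 v) := by
  have hm : ∀ n : ℕ, Integrable (fun y : ℝ => y ^ n) (gaussianReal 0 v) := by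
    intro n
    have h := (memLp_id_gaussianReal (μ := 0) (v := v) (n : NNReal))
    have h2 := MemLp.integrable_norm_pow' (f := (id : ℝ → ℝ)) (p := n) (by simpa using h)
    refine (integrable_norm_iff (by fun_prop)).1 ?_
    simpa using h2
  simp_rw [Polynomial.eval_eq_sum_range]
  exact integrable_finsetSum _ fun i _ => (hm i).const_mul _

lemma stein (P : Polynomial ℝ) :
    ∫ y, y * P.eval y ∂(gaussianReal 0 1) = ∫ y, P.derivative.eval y ∂(gaussianReal 0 1) := by
  have key : ∀ Q : Polynomial ℝ, Integrable (fun y => gaussianPDFReal 0 1 y * Q.eval y) := by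
    intro Q
    have h := gpoly_int 1 Q
    rw [gaussianReal_of_var_ne_zero 0 (one_ne_zero),
      integrable_withDensity_iff_integrable_smul' (measurable_gaussianPDF _ _)
        (Filter.Eventually.of_forall fun _ => gaussianPDF_lt_top)] at h
    simpa using h
  have hd : ∀ y : ℝ, HasDerivAt (gaussianPDFReal 0 1) (- y * gaussianPDFReal 0 1 y) y := by
    intro y
    rw [gaussianPDFReal_def]
    have h1 : HasDerivAt (fun x : ℝ => -(x - 0) ^ 2 / (2 * ((1 : NNReal) : ℝ))) (-y) y := by
      have := (((hasDerivAt_id y).sub_const 0).pow 2).neg.div_const (2 * ((1 : NNReal) : ℝ))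
      refine this.congr_deriv ?_
      simp
      ring
    have := (h1.exp).const_mul (√(2 * Real.pi * ((1 : NNReal) : ℝ)))⁻¹
    refine this.congr_deriv ?_
    ring
  have h0 := integral_eq_zero_of_hasDerivAt_of_integrable
    (f := fun y => gaussianPDFReal 0 1 y * P.eval y)
    (f' := fun y => gaussianPDFReal 0 1 y * (P.derivative - Polynomial.X * P).eval y)
    (fun y => by
      have := (hd y).mul (P.hasDerivAt y)
      refine this.congr_deriv ?_
      simp; ring) (key _) (key _)
  have h1 : ∫ y, (P.derivative - Polynomial.X * P).eval y ∂(gaussianReal 0 1) = 0 := by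
    rw [integral_gaussianReal_eq_integral_smul one_ne_zero]
    simpa using h0
  have h2 : ∀ y, (P.derivative - Polynomial.X * P).eval y
      = P.derivative.eval y - (Polynomial.X * P).eval y := by intro y; simp
  simp_rw [h2] at h1
  rw [integral_sub (gpoly_int _ _) (gpoly_int _ _)] at h1
  simp only [Polynomial.eval_mul, Polynomial.eval_X] at h1
  linarith

/-- real Hermite polynomial -/
noncomputable def heR (t : ℕ) : Polynomial ℝ := (Polynomial.hermite t).map (Int.castRingHom ℝ)

lemma heR_eval (t : ℕ) (y : ℝ) :
    Polynomial.aeval y (Polynomial.hermite t) = (heR t).eval y := by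
  rw [heR, Polynomial.eval_map, Polynomial.aeval_def]; rfl

lemma int_mul_heR (t : ℕ) : ∀ P : Polynomial ℝ,
    ∫ y, P.eval y * (heR t).eval y ∂(gaussianReal 0 1)
      = ∫ y, (Polynomial.derivative^[t] P).eval y ∂(gaussianReal 0 1) := by
  induction t with
  | zero => intro P; simp [heR]
  | succ t ih =>
    intro P
    have h1 : heR (t + 1) = Polynomial.X * heR t - (heR t).derivative := by
      simp [heR, Polynomial.hermite_succ, Polynomial.derivative_map]
    have h2 : ∀ y, P.eval y * (heR (t + 1)).eval y
        = (Polynomial.X * (P * heR t)).eval y - (P * (heR t).derivative).eval y := by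
      intro y; rw [h1]; simp; ring
    simp_rw [h2]
    rw [integral_sub (gpoly_int _ _) (gpoly_int _ _)]
    have h3 := stein (P * heR t)
    have h4 : ∀ y, (Polynomial.derivative (P * heR t)).eval y =
      (P.derivative * heR t).eval y + (P * (heR t).derivative).eval y := by
      intro y; rw [Polynomial.derivative_mul]; simp
    simp_rw [h4] at h3
    rw [integral_add (gpoly_int _ _) (gpoly_int _ _)] at h3
    have h5 := ih P.derivative
    simp only [Polynomial.eval_mul, Polynomial.eval_X] at h3 h5 ⊢
    rw [h3, Function.iterate_succ_apply, ← h5]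
    ring

lemma heR_natDegree (t : ℕ) : (heR t).natDegree = t := by
  rw [heR, Polynomial.natDegree_map_eq_of_injective (by exact Int.cast_injective),
    Polynomial.natDegree_hermite]

lemma heR_monic (t : ℕ) : (heR t).Monic := (Polynomial.hermite_monic t).map _

lemma int_mul_heR_lt (t : ℕ) (P : Polynomial ℝ) (h : P.natDegree < t) :
    ∫ y, P.eval y * (heR t).eval y ∂(gaussianReal 0 1) = 0 := by
  rw [int_mul_heR, Polynomial.iterate_derivative_eq_zero h]; simp

lemma int_mul_heR_eq (t : ℕ) (P : Polynomial ℝ) (h : P.natDegree = t) (hm : P.Monic) :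
    ∫ y, P.eval y * (heR t).eval y ∂(gaussianReal 0 1) = t.factorial := by
  rw [int_mul_heR]
  subst h
  have : (Polynomial.derivative^[P.natDegree] P) = Polynomial.C (P.natDegree.factorial : ℝ) := by
    have h1 : (Polynomial.derivative^[P.natDegree] P).natDegree ≤ 0 := by
      simpa using Polynomial.natDegree_iterate_derivative P P.natDegree
    rw [Polynomial.eq_C_of_natDegree_le_zero h1, Polynomial.coeff_iterate_derivative]
    simp [hm.coeff_natDegree, Nat.descFactorial_self]
  rw [this]; simp

lemma hermN_eq (t : ℕ) (y : ℝ) : hermN t y = (heR t).eval y / √(t.factorial : ℝ) := by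
  rw [hermN, heR_eval]

lemma hermN_orth (s t : ℕ) :
    ∫ y, hermN s y * hermN t y ∂(gaussianReal 0 1) = if s = t then 1 else 0 := by
  have h : ∀ s t y, hermN s y * hermN t y =
      ((heR s).eval y * (heR t).eval y) / (√(s.factorial : ℝ) * √(t.factorial : ℝ)) := by
    intro s t y; rw [hermN_eq, hermN_eq]; ring
  have hlt : ∀ s t, s < t → ∫ y, hermN s y * hermN t y ∂(gaussianReal 0 1) = 0 := by
    intro s t hst
    simp_rw [h]
    rw [integral_div, int_mul_heR_lt _ _ (by rwa [heR_natDegree])]; simp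
  rcases lt_trichotomy s t with hst | hst | hst
  · rw [hlt s t hst, if_neg hst.ne]
  · subst hst
    simp_rw [h]
    rw [integral_div, int_mul_heR_eq _ _ (heR_natDegree s) (heR_monic s), if_pos trivial,
      Real.mul_self_sqrt (by positivity), div_self (by positivity)]
  · rw [if_neg hst.ne']
    refine Eq.trans ?_ (hlt t s hst)
    simp_rw [mul_comm]

/-- one dimensional mixed moment -/
noncomputable def mom (s t : ℕ) : ℝ := ∫ y, y ^ s * hermN t y ∂(gaussianReal 0 1)

lemma mom_lt {s t : ℕ} (h : s < t) : mom s t = 0 := by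
  have h1 : ∀ y : ℝ, y ^ s * hermN t y =
      ((Polynomial.X ^ s : Polynomial ℝ).eval y * (heR t).eval y) / √(t.factorial : ℝ) := by
    intro y; rw [hermN_eq]; simp; ring
  simp_rw [mom, h1]
  rw [integral_div, int_mul_heR_lt _ _ (by simpa using h)]; simp

lemma mom_self (t : ℕ) : mom t t ≠ 0 := by
  have h1 : ∀ y : ℝ, y ^ t * hermN t y =
      ((Polynomial.X ^ t : Polynomial ℝ).eval y * (heR t).eval y) / √(t.factorial : ℝ) := by
    intro y; rw [hermN_eq]; simp; ring
  simp_rw [mom, h1]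
  rw [integral_div, int_mul_heR_eq _ _ (by simp) (by simp)]
  positivity

lemma mv_int {d : ℕ} (v : NNReal) (G : MvPolynomial (Fin d) ℝ) :
    Integrable (fun x => MvPolynomial.eval x G) (Measure.pi fun _ : Fin d => gaussianReal 0 v) := by
  simp_rw [MvPolynomial.eval_eq']
  refine integrable_finsetSum _ fun S _ => Integrable.const_mul ?_ _
  refine Integrable.fintype_prod (f := fun i (y : ℝ) => y ^ (S i)) fun i => ?_
  simpa using gpoly_int v (Polynomial.X ^ (S i))

lemma mv_int' {d : ℕ} (G : MvPolynomial (Fin d) ℝ) :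
    Integrable (fun x => MvPolynomial.eval x G) (gaussD d) := mv_int 1 G

/-- multivariate Hermite polynomial as a formal polynomial -/
noncomputable def chiP {d : ℕ} (T : Fin d → ℕ) : MvPolynomial (Fin d) ℝ :=
  ∏ i, MvPolynomial.C (1 / √((T i).factorial : ℝ)) *
    Polynomial.aeval (MvPolynomial.X i : MvPolynomial (Fin d) ℝ) (heR (T i))

lemma chiP_eval {d : ℕ} (T : Fin d → ℕ) (x : Fin d → ℝ) :
    MvPolynomial.eval x (chiP T) = chiH T x := by
  rw [chiP, chiH, map_prod]
  refine Finset.prod_congr rfl fun i _ => ?_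
  rw [map_mul, MvPolynomial.eval_C, hermN_eq]
  have : MvPolynomial.eval x
      (Polynomial.aeval (MvPolynomial.X i : MvPolynomial (Fin d) ℝ) (heR (T i)))
      = (heR (T i)).eval (x i) := by
    rw [Polynomial.aeval_def, Polynomial.hom_eval₂, Polynomial.eval]
    congr 1
    · ext; simp
    · simp
  rw [this]; ring

lemma chiP_deg {d : ℕ} (T : Fin d → ℕ) : (chiP T).totalDegree ≤ ∑ i, T i := by
  rw [chiP]
  refine (MvPolynomial.totalDegree_finsetProd _ _).trans (Finset.sum_le_sum fun i _ => ?_)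
  refine (MvPolynomial.totalDegree_mul _ _).trans ?_
  rw [MvPolynomial.totalDegree_C, zero_add, Polynomial.aeval_eq_sum_range, heR_natDegree]
  refine (MvPolynomial.totalDegree_finsetSum _ _).trans (Finset.sup_le fun j hj => ?_)
  refine (MvPolynomial.totalDegree_smul_le _ _).trans ?_
  rw [MvPolynomial.totalDegree_X_pow]
  simp at hj; omega

lemma prod_mom_zero {d : ℕ} (S T : Fin d → ℕ) (h : ∑ i, S i ≤ ∑ i, T i) (hne : S ≠ T) :
    ∏ i, mom (S i) (T i) = 0 := by
  by_contra hc
  have h1 : ∀ i, T i ≤ S i := by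
    intro i
    by_contra hlt
    exact hc (Finset.prod_eq_zero (Finset.mem_univ i) (mom_lt (not_le.1 hlt)))
  apply hne
  have h2 : ∑ i, T i = ∑ i, S i := le_antisymm (Finset.sum_le_sum fun i _ => h1 i) h
  have := (Finset.sum_eq_sum_iff_of_le (fun i _ => h1 i)).1 h2
  funext i
  exact (this i (Finset.mem_univ i)).symm

lemma prod_mom_ne {d : ℕ} (T : Fin d → ℕ) : ∏ i, mom (T i) (T i) ≠ 0 :=
  Finset.prod_ne_zero_iff.2 fun i _ => mom_self (T i)

lemma int_monom {d : ℕ} (S T : Fin d → ℕ) :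
    ∫ x, (∏ i, x i ^ S i) * chiH T x ∂(gaussD d) = ∏ i, mom (S i) (T i) := by
  simp_rw [chiH, ← Finset.prod_mul_distrib]
  rw [gaussD, integral_fintype_prod_eq_prod (fun i (y : ℝ) => y ^ S i * hermN (T i) y)]
  rfl

lemma chiH_orth {d : ℕ} (S T : Fin d → ℕ) :
    ∫ x, chiH S x * chiH T x ∂(gaussD d) = if S = T then 1 else 0 := by
  simp_rw [chiH, ← Finset.prod_mul_distrib]
  rw [gaussD, integral_fintype_prod_eq_prod (fun i (y : ℝ) => hermN (S i) y * hermN (T i) y)]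
  simp_rw [hermN_orth]
  split_ifs with h
  · subst h; simp
  · obtain ⟨i, hi⟩ := Function.ne_iff.1 h
    exact Finset.prod_eq_zero (Finset.mem_univ i) (if_neg hi)

/-- Hermite coefficient as a linear map -/
noncomputable def hco {d : ℕ} (T : Fin d → ℕ) : MvPolynomial (Fin d) ℝ →ₗ[ℝ] ℝ where
  toFun G := ∫ x, MvPolynomial.eval x G * chiH T x ∂(gaussD d)
  map_add' G G' := by
    have : ∀ x, MvPolynomial.eval x (G + G') * chiH T x =
      MvPolynomial.eval x (G * chiP T) + MvPolynomial.eval x (G' * chiP T) := by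
      intro x; simp [chiP_eval]; ring
    simp_rw [this]
    rw [integral_add (mv_int' _) (mv_int' _)]
    simp [chiP_eval]
  map_smul' c G := by
    have : ∀ x, MvPolynomial.eval x (c • G) * chiH T x =
      c * (MvPolynomial.eval x G * chiH T x) := by
      intro x; simp [MvPolynomial.smul_eval]; ring
    simp_rw [this]
    rw [integral_const_mul]; rfl

lemma hco_apply {d : ℕ} (T : Fin d → ℕ) (G : MvPolynomial (Fin d) ℝ) :
    hco T G = ∫ x, MvPolynomial.eval x G * chiH T x ∂(gaussD d) := rfl

lemma hco_chiP {d : ℕ} (S T : Fin d → ℕ) : hco T (chiP S) = if S = T then 1 else 0 := by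
  rw [hco_apply, ← chiH_orth]; simp_rw [chiP_eval]

lemma hco_eq {d : ℕ} (T : Fin d → ℕ) (G : MvPolynomial (Fin d) ℝ) :
    hco T G = ∑ S ∈ G.support, G.coeff S * ∏ i, mom (S i) (T i) := by
  conv_lhs => rw [G.as_sum, map_sum]
  refine Finset.sum_congr rfl fun S _ => ?_
  rw [hco_apply, ← int_monom, ← integral_const_mul]
  congr 1
  funext x
  rw [MvPolynomial.eval_monomial, Finsupp.prod_fintype _ _ (by simp)]
  ring

/-- multiindex of total degree at most p from a finsupp -/
def toM {d p : ℕ} (T : Fin d → ℕ) (h : ∑ i, T i ≤ p) : MIdx d p :=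
  ⟨fun i => ⟨T i, by
    have := Finset.single_le_sum (f := T) (fun _ _ => Nat.zero_le _) (Finset.mem_univ i)
    omega⟩, h⟩

lemma toM_toFun {d p : ℕ} (T : Fin d → ℕ) (h : ∑ i, T i ≤ p) : (toM T h).toFun = T := rfl

lemma MIdx.toFun_inj {d p : ℕ} {S T : MIdx d p} (h : S.toFun = T.toFun) : S = T := by
  apply Subtype.ext
  funext i
  exact Fin.ext (congrFun h i)

lemma MIdx.sum_le {d p : ℕ} (T : MIdx d p) : ∑ i, T.toFun i ≤ p := T.2

lemma hermVec_eq {d p : ℕ} (G : MvPolynomial (Fin d) ℝ) (T : MIdx d p) :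
    hermVec d p G T = hco T.toFun G := rfl

lemma hco_inj {d p : ℕ} (G : MvPolynomial (Fin d) ℝ) (hG : G.totalDegree ≤ p)
    (h : ∀ T : MIdx d p, hco T.toFun G = 0) : G = 0 := by
  by_contra hne
  obtain ⟨T, hT, hdeg⟩ := Finset.exists_mem_eq_sup G.support
    (MvPolynomial.support_nonempty.2 hne) (fun m => m.sum fun _ e => e)
  have hsum : ∀ S : Fin d →₀ ℕ, (S.sum fun _ e => e) = ∑ i, S i :=
    fun S => Finsupp.sum_fintype _ _ (by simp)
  have hTd : ∑ i, T i = G.totalDegree := by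
    rw [MvPolynomial.totalDegree, hdeg, hsum]
  have h1 := h (toM T (by omega))
  rw [toM_toFun, hco_eq, Finset.sum_eq_single T] at h1
  · rcases mul_eq_zero.1 h1 with h2 | h2
    · exact MvPolynomial.mem_support_iff.1 hT h2
    · exact prod_mom_ne _ h2
  · intro S hS hne'
    rw [prod_mom_zero, mul_zero]
    · have := MvPolynomial.le_totalDegree hS
      rw [hsum] at this
      omega
    · intro hh; exact hne' (DFunLike.coe_injective hh)
  · intro hh; exact absurd hT hh

lemma expand {d p : ℕ} (G : MvPolynomial (Fin d) ℝ) (hG : G.totalDegree ≤ p) :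
    G = ∑ T : MIdx d p, (hco T.toFun G) • chiP T.toFun := by
  rw [← sub_eq_zero]
  apply hco_inj (p := p)
  · refine (MvPolynomial.totalDegree_sub _ _).trans (max_le hG ?_)
    refine (MvPolynomial.totalDegree_finsetSum _ _).trans (Finset.sup_le fun T _ => ?_)
    exact (MvPolynomial.totalDegree_smul_le _ _).trans ((chiP_deg _).trans T.sum_le)
  · intro T
    rw [map_sub, map_sum, Finset.sum_eq_single T]
    · simp [hco_chiP]
    · intro S _ hne
      rw [map_smul, hco_chiP, if_neg (fun h => hne (MIdx.toFun_inj h))]; simp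
    · simp

lemma int_sq_sum {d p : ℕ} (c : MIdx d p → ℝ) :
    ∫ x, (MvPolynomial.eval x (∑ T : MIdx d p, c T • chiP T.toFun)) ^ 2 ∂(gaussD d)
      = ∑ T, c T ^ 2 := by
  have h1 : ∀ x, (MvPolynomial.eval x (∑ T : MIdx d p, c T • chiP T.toFun)) ^ 2 =
      ∑ S : MIdx d p, ∑ T : MIdx d p,
        MvPolynomial.eval x ((c S * c T) • (chiP S.toFun * chiP T.toFun)) := by
    intro x
    rw [sq, map_sum, Finset.sum_mul_sum]
    refine Finset.sum_congr rfl fun S _ => Finset.sum_congr rfl fun T _ => ?_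
    simp [MvPolynomial.smul_eval]; ring
  simp_rw [h1]
  rw [integral_finsetSum _ fun S _ => integrable_finsetSum _ fun T _ => mv_int' _]
  refine Finset.sum_congr rfl fun S _ => ?_
  rw [integral_finsetSum _ fun T _ => mv_int' _]
  have h2 : ∀ T : MIdx d p,
      ∫ x, MvPolynomial.eval x ((c S * c T) • (chiP S.toFun * chiP T.toFun)) ∂(gaussD d)
      = if S = T then c S * c T else 0 := by
    intro T
    simp_rw [MvPolynomial.smul_eval, map_mul, chiP_eval]
    rw [integral_const_mul, chiH_orth]
    by_cases h : S = T
    · simp [h]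
    · rw [if_neg h, if_neg (fun hh => h (MIdx.toFun_inj hh))]; simp
  simp_rw [h2]
  simp [sq]

lemma eq_zero_of_int_sq {d : ℕ} (G : MvPolynomial (Fin d) ℝ)
    (h : ∫ x, (MvPolynomial.eval x G) ^ 2 ∂(gaussD d) = 0) : G = 0 := by
  rw [expand G le_rfl, int_sq_sum, Finset.sum_eq_zero_iff_of_nonneg (fun _ _ => sq_nonneg _)] at h
  apply hco_inj G le_rfl
  intro T
  exact pow_eq_zero_iff (two_ne_zero) |>.1 (h T (Finset.mem_univ T))

/-- Hermite coefficient of a power feature -/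
noncomputable def Pk {d : ℕ} (k : ℕ) (T : Fin d → ℕ) (wb : (Fin d → ℝ) × ℝ) : ℝ :=
  ∫ x, (∑ i, wb.1 i * x i + wb.2) ^ k * chiH T x ∂(gaussD d)

/-- coefficient polynomials of `Pk` -/
noncomputable def Qk {d : ℕ} (k j : ℕ) (T : Fin d → ℕ) : MvPolynomial (Fin d) ℝ :=
  ∑ S ∈ Finset.piAntidiag (Finset.univ : Finset (Fin d)) j,
    MvPolynomial.C ((k.choose j : ℝ) * (Nat.multinomial Finset.univ S : ℝ) *
      ∏ i, mom (S i) (T i)) * ∏ i, MvPolynomial.X i ^ S i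

lemma lin_pow {d : ℕ} (k : ℕ) (w x : Fin d → ℝ) (b : ℝ) :
    (∑ i, w i * x i + b) ^ k = ∑ j ∈ Finset.range (k + 1),
      ∑ S ∈ Finset.piAntidiag (Finset.univ : Finset (Fin d)) j,
        (b ^ (k - j) * ((k.choose j : ℝ) * (Nat.multinomial Finset.univ S : ℝ)
          * ∏ i, w i ^ S i)) * ∏ i, x i ^ S i := by
  rw [add_pow]
  refine Finset.sum_congr rfl fun j _ => ?_
  rw [Finset.sum_pow_eq_sum_piAntidiag, Finset.sum_mul, Finset.sum_mul]
  refine Finset.sum_congr rfl fun S _ => ?_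
  simp_rw [mul_pow, Finset.prod_mul_distrib]
  ring

lemma monom_chi_int {d : ℕ} (S T : Fin d → ℕ) :
    Integrable (fun x => (∏ i, x i ^ S i) * chiH T x) (gaussD d) := by
  have := mv_int' ((∏ i, MvPolynomial.X i ^ S i) * chiP T)
  simpa [chiP_eval] using this

lemma Pk_eq {d : ℕ} (k : ℕ) (T : Fin d → ℕ) (wb : (Fin d → ℝ) × ℝ) :
    Pk k T wb = ∑ j ∈ Finset.range (k + 1),
      wb.2 ^ (k - j) * MvPolynomial.eval wb.1 (Qk k j T) := by
  rw [Pk]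
  simp_rw [lin_pow, Finset.sum_mul, mul_assoc _ (∏ i, _ ^ _) (chiH _ _)]
  rw [integral_finsetSum _ fun j _ => integrable_finsetSum _ fun S _ =>
    (monom_chi_int _ _).const_mul _]
  refine Finset.sum_congr rfl fun j _ => ?_
  rw [integral_finsetSum _ fun S _ => (monom_chi_int _ _).const_mul _, Qk, map_sum, Finset.mul_sum]
  refine Finset.sum_congr rfl fun S _ => ?_
  rw [integral_const_mul, int_monom]
  simp
  ring

lemma Qk_lt {d : ℕ} (k j : ℕ) (T : Fin d → ℕ) (h : j < ∑ i, T i) : Qk k j T = 0 := by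
  rw [Qk]
  refine Finset.sum_eq_zero fun S hS => ?_
  have hS' : ∑ i, S i = j := (Finset.mem_piAntidiag.1 hS).1
  rw [prod_mom_zero]
  · simp
  · omega
  · rintro rfl; omega

lemma Pk_lt {d : ℕ} (k : ℕ) (T : Fin d → ℕ) (h : k < ∑ i, T i) (wb : (Fin d → ℝ) × ℝ) :
    Pk k T wb = 0 := by
  rw [Pk_eq]
  refine Finset.sum_eq_zero fun j hj => ?_
  rw [Qk_lt, map_zero, mul_zero]
  simp at hj; omega

/-- leading constant -/
noncomputable def lc {d : ℕ} (T : Fin d → ℕ) : ℝ :=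
  (Nat.multinomial Finset.univ T : ℝ) * ∏ i, mom (T i) (T i)

lemma lc_ne {d : ℕ} (T : Fin d → ℕ) : lc T ≠ 0 :=
  mul_ne_zero (by exact_mod_cast (Nat.multinomial_pos _ _).ne') (prod_mom_ne T)

lemma Pk_top {d : ℕ} (T : Fin d → ℕ) (wb : (Fin d → ℝ) × ℝ) :
    Pk (∑ i, T i) T wb = lc T * ∏ i, wb.1 i ^ T i := by
  rw [Pk_eq, Finset.sum_eq_single (∑ i, T i)]
  · rw [Qk, Finset.sum_eq_single T]
    · simp [lc]
    · intro S hS hne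
      rw [prod_mom_zero _ _ (Finset.mem_piAntidiag.1 hS).1.le hne]; simp
    · intro h
      exact absurd (Finset.mem_piAntidiag.2 ⟨rfl, by simp⟩) h
  · intro j hj hne
    rw [Qk_lt, map_zero, mul_zero]
    simp at hj; omega
  · simp

lemma Pk_int {d : ℕ} (v : NNReal) (k k' : ℕ) (T T' : Fin d → ℕ) :
    Integrable (fun wb => Pk k T wb * Pk k' T' wb) (featMeas d v) := by
  simp_rw [Pk_eq, Finset.sum_mul_sum]
  refine integrable_finsetSum _ fun j _ => integrable_finsetSum _ fun j' _ => ?_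
  have h1 := mv_int v (Qk k j T * Qk k' j' T')
  have h2 := gpoly_int v (Polynomial.X ^ (k - j) * Polynomial.X ^ (k' - j'))
  refine (h1.mul_prod h2).congr (Filter.Eventually.of_forall fun wb => ?_)
  simp
  ring

lemma Pk_smul {d : ℕ} (k : ℕ) (T : Fin d → ℕ) (s : ℝ) (wb : (Fin d → ℝ) × ℝ) :
    Pk k T (fun i => s * wb.1 i, s * wb.2) = s ^ k * Pk k T wb := by
  rw [Pk, Pk, ← integral_const_mul]
  congr 1
  funext x
  rw [← mul_assoc, ← mul_pow, mul_add, Finset.mul_sum]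
  simp_rw [mul_assoc]

lemma feat_map (d : ℕ) (s : ℝ) :
    (featMeas d 1).map (fun wb => ((fun i => s * wb.1 i, s * wb.2) : (Fin d → ℝ) × ℝ))
      = featMeas d (s ^ 2).toNNReal := by
  have h1 : (gaussianReal 0 1).map (fun y => s * y) = gaussianReal 0 (s ^ 2).toNNReal := by
    have := gaussianReal_map_const_mul (μ := 0) (v := 1) s
    rw [this]
    congr 1
    · simp
    · ext; simp [Real.coe_toNNReal _ (sq_nonneg s)]
  rw [featMeas, featMeas]
  have h2 := Measure.pi_map_pi (μ := fun _ : Fin d => gaussianReal 0 1)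
    (f := fun _ y => s * y) (fun i => by fun_prop)
  simp only [h1] at h2
  rw [← h2, ← h1, Measure.map_prod_map _ _ (by fun_prop) (by fun_prop)]
  rfl

/-- moment of two features -/
noncomputable def Ik {d : ℕ} (k k' : ℕ) (T T' : Fin d → ℕ) : ℝ :=
  ∫ wb, Pk k T wb * Pk k' T' wb ∂(featMeas d 1)

lemma Ik_scale {d : ℕ} (s : ℝ) (k k' : ℕ) (T T' : Fin d → ℕ) :
    ∫ wb, Pk k T wb * Pk k' T' wb ∂(featMeas d (s ^ 2).toNNReal)
      = s ^ (k + k') * Ik k k' T T' := by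
  have hae := (Pk_int (s ^ 2).toNNReal k k' T T').aestronglyMeasurable
  rw [← feat_map] at hae ⊢
  rw [integral_map (by fun_prop) hae]
  simp_rw [Pk_smul]
  rw [Ik, ← integral_const_mul]
  congr 1
  funext wb
  ring

lemma phiHat_eq {d p : ℕ} (σ : ℝ → ℝ) (cf : Fin (p + 1) → ℝ)
    (hσ : ∀ y, σ y = ∑ k : Fin (p + 1), cf k * y ^ (k : ℕ)) (wb : (Fin d → ℝ) × ℝ)
    (T : Fin d → ℕ) : phiHat d σ wb.1 wb.2 T = ∑ k, cf k * Pk k T wb := by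
  have hint : ∀ k : ℕ, Integrable (fun x => (∑ i, wb.1 i * x i + wb.2) ^ k * chiH T x)
      (gaussD d) := by
    intro k
    have := mv_int' ((∑ i, MvPolynomial.C (wb.1 i) * MvPolynomial.X i + MvPolynomial.C wb.2) ^ k
      * chiP T)
    simpa [chiP_eval] using this
  rw [phiHat]
  simp_rw [hσ, Finset.sum_mul, mul_assoc]
  rw [integral_finsetSum _ fun (k : Fin (p + 1)) _ => (hint (k : ℕ)).const_mul (cf k)]
  simp_rw [integral_const_mul]
  rfl

/-- rescaled kernel matrix -/
noncomputable def Mm (d p : ℕ) (cf : Fin (p + 1) → ℝ) (s : ℝ) (T T' : MIdx d p) : ℝ :=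
  ∑ k : Fin (p + 1), ∑ k' : Fin (p + 1), cf k * cf k' *
    (s ^ (((k : ℕ) - ∑ i, T.toFun i) + ((k' : ℕ) - ∑ i, T'.toFun i)) *
      Ik (k : ℕ) (k' : ℕ) T.toFun T'.toFun)

lemma PhiMat_eq {d p : ℕ} (σ : ℝ → ℝ) (cf : Fin (p + 1) → ℝ)
    (hσ : ∀ y, σ y = ∑ k : Fin (p + 1), cf k * y ^ (k : ℕ)) (s : ℝ) (T T' : MIdx d p) :
    PhiMat d p σ (s ^ 2) T T' =
      s ^ (∑ i, T.toFun i) * s ^ (∑ i, T'.toFun i) * Mm d p cf s T T' := by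
  rw [PhiMat]
  simp_rw [phiHat_eq σ cf hσ, Finset.sum_mul_sum]
  have h0 : ∀ (k k' : Fin (p + 1)) (wb : (Fin d → ℝ) × ℝ),
      cf k * Pk k T.toFun wb * (cf k' * Pk k' T'.toFun wb) =
      cf k * cf k' * (Pk k T.toFun wb * Pk k' T'.toFun wb) := by intros; ring
  simp_rw [h0]
  rw [integral_finsetSum _ fun k _ => integrable_finsetSum _ fun k' _ =>
    (Pk_int _ _ _ _ _).const_mul _, Mm, Finset.mul_sum]
  refine Finset.sum_congr rfl fun k _ => ?_
  rw [integral_finsetSum _ fun k' _ => (Pk_int _ _ _ _ _).const_mul _, Finset.mul_sum]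
  refine Finset.sum_congr rfl fun k' _ => ?_
  rw [integral_const_mul, Ik_scale]
  by_cases h1 : (k : ℕ) < ∑ i, T.toFun i
  · have : Ik (k : ℕ) (k' : ℕ) T.toFun T'.toFun = 0 := by simp [Ik, Pk_lt _ _ h1]
    rw [this]; simp
  by_cases h2 : (k' : ℕ) < ∑ i, T'.toFun i
  · have : Ik (k : ℕ) (k' : ℕ) T.toFun T'.toFun = 0 := by simp [Ik, Pk_lt _ _ h2]
    rw [this]; simp
  have h3 : s ^ ((k : ℕ) + (k' : ℕ)) = s ^ (∑ i, T.toFun i) * s ^ (∑ i, T'.toFun i) *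
      s ^ (((k : ℕ) - ∑ i, T.toFun i) + ((k' : ℕ) - ∑ i, T'.toFun i)) := by
    rw [← pow_add, ← pow_add]; congr 1; omega
  rw [h3]; ring

/-- constants at `s = 0` -/
noncomputable def uc {d p : ℕ} (cf : Fin (p + 1) → ℝ) (T : MIdx d p) : ℝ :=
  cf ⟨∑ i, T.toFun i, Nat.lt_succ_of_le T.sum_le⟩ * lc T.toFun

lemma Mm_zero {d p : ℕ} (cf : Fin (p + 1) → ℝ) (T T' : MIdx d p) :
    Mm d p cf 0 T T' = uc cf T * uc cf T' *
      ∫ w, (∏ i, w i ^ T.toFun i) * (∏ i, w i ^ T'.toFun i) ∂(gaussD d) := by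
  have hz : ∀ (k k' : Fin (p + 1)),
      ((k : ℕ) ≠ ∑ i, T.toFun i ∨ (k' : ℕ) ≠ ∑ i, T'.toFun i) → cf k * cf k' *
    ((0 : ℝ) ^ (((k : ℕ) - ∑ i, T.toFun i) + ((k' : ℕ) - ∑ i, T'.toFun i)) *
      Ik (k : ℕ) (k' : ℕ) T.toFun T'.toFun) = 0 := by
    intro k k' h
    by_cases h1 : (k : ℕ) < ∑ i, T.toFun i
    · have : Ik (k : ℕ) (k' : ℕ) T.toFun T'.toFun = 0 := by simp [Ik, Pk_lt _ _ h1]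
      rw [this]; simp
    by_cases h2 : (k' : ℕ) < ∑ i, T'.toFun i
    · have : Ik (k : ℕ) (k' : ℕ) T.toFun T'.toFun = 0 := by simp [Ik, Pk_lt _ _ h2]
      rw [this]; simp
    rw [zero_pow (by omega)]; simp
  rw [Mm, Finset.sum_eq_single ⟨∑ i, T.toFun i, Nat.lt_succ_of_le T.sum_le⟩,
    Finset.sum_eq_single ⟨∑ i, T'.toFun i, Nat.lt_succ_of_le T'.sum_le⟩]
  · simp only [Nat.sub_self, add_zero, pow_zero, one_mul, Ik, Pk_top, uc]
    have h0 : ∀ wb : (Fin d → ℝ) × ℝ,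
      (lc T.toFun * ∏ i, wb.1 i ^ T.toFun i) * (lc T'.toFun * ∏ i, wb.1 i ^ T'.toFun i) =
      (lc T.toFun * lc T'.toFun) *
        ((∏ i, wb.1 i ^ T.toFun i) * ∏ i, wb.1 i ^ T'.toFun i) := by intros; ring
    simp_rw [h0]
    rw [integral_const_mul, featMeas, integral_fun_fst (fun w : Fin d → ℝ =>
      (∏ i, w i ^ T.toFun i) * ∏ i, w i ^ T'.toFun i)]
    simp [gaussD]
    ring
  · intro k' _ hne
    exact hz _ _ (Or.inr fun h => hne (Fin.ext h))
  · simp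
  · intro k _ hne
    exact Finset.sum_eq_zero fun k' _ => hz _ _ (Or.inl fun h => hne (Fin.ext h))
  · simp

lemma Mm_cont (d p : ℕ) (cf : Fin (p + 1) → ℝ) (T T' : MIdx d p) :
    Continuous (fun s => Mm d p cf s T T') := by
  unfold Mm
  fun_prop

lemma Mm_symm (d p : ℕ) (cf : Fin (p + 1) → ℝ) (s : ℝ) (T T' : MIdx d p) :
    Mm d p cf s T T' = Mm d p cf s T' T := by
  rw [Mm, Mm, Finset.sum_comm]
  refine Finset.sum_congr rfl fun k _ => Finset.sum_congr rfl fun k' _ => ?_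
  have : Ik (k' : ℕ) (k : ℕ) T.toFun T'.toFun = Ik (k : ℕ) (k' : ℕ) T'.toFun T.toFun := by
    rw [Ik, Ik]; simp_rw [mul_comm]
  rw [this, add_comm]; ring

lemma Mm_zero_form {d p : ℕ} (cf : Fin (p + 1) → ℝ) (hcf : ∀ k, cf k ≠ 0)
    (y : MIdx d p → ℝ) (hy : y ≠ 0) : 0 < ∑ T, ∑ T', y T * Mm d p cf 0 T T' * y T' := by
  set G : MvPolynomial (Fin d) ℝ := ∑ T : MIdx d p,
    MvPolynomial.monomial (Finsupp.equivFunOnFinite.symm T.toFun) (y T * uc cf T) with hG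
  have hev : ∀ w, MvPolynomial.eval w G = ∑ T : MIdx d p, y T * uc cf T * ∏ i, w i ^ T.toFun i := by
    intro w
    rw [hG, map_sum]
    refine Finset.sum_congr rfl fun T _ => ?_
    rw [MvPolynomial.eval_monomial, Finsupp.prod_fintype _ _ (by simp)]
    rfl
  have hint : ∀ T T' : MIdx d p, Integrable (fun w : Fin d → ℝ =>
      (∏ i, w i ^ T.toFun i) * (∏ i, w i ^ T'.toFun i)) (gaussD d) := by
    intro T T'
    have := mv_int' ((∏ i, MvPolynomial.X i ^ T.toFun i) * ∏ i, MvPolynomial.X i ^ T'.toFun i)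
    simpa using this
  have h1 : ∑ T, ∑ T', y T * Mm d p cf 0 T T' * y T' =
      ∫ w, (MvPolynomial.eval w G) ^ 2 ∂(gaussD d) := by
    have : ∀ w, (MvPolynomial.eval w G) ^ 2 = ∑ T : MIdx d p, ∑ T' : MIdx d p,
        (y T * uc cf T * (y T' * uc cf T')) *
          ((∏ i, w i ^ T.toFun i) * (∏ i, w i ^ T'.toFun i)) := by
      intro w
      rw [hev, sq, Finset.sum_mul_sum]
      refine Finset.sum_congr rfl fun T _ => Finset.sum_congr rfl fun T' _ => ?_
      ring
    simp_rw [this]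
    rw [integral_finsetSum _ fun T _ => integrable_finsetSum _ fun T' _ =>
      (hint T T').const_mul _]
    refine Finset.sum_congr rfl fun T _ => ?_
    rw [integral_finsetSum _ fun T' _ => (hint T T').const_mul _]
    refine Finset.sum_congr rfl fun T' _ => ?_
    rw [integral_const_mul, Mm_zero]
    ring
  rw [h1]
  refine lt_of_le_of_ne (integral_nonneg fun w => sq_nonneg _) fun h0 => hy ?_
  have hz := eq_zero_of_int_sq G h0.symm
  funext T
  have hc : MvPolynomial.coeff (Finsupp.equivFunOnFinite.symm T.toFun) G = y T * uc cf T := by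
    rw [hG, MvPolynomial.coeff_sum, Finset.sum_eq_single T]
    · rw [MvPolynomial.coeff_monomial, if_pos rfl]
    · intro S _ hne
      rw [MvPolynomial.coeff_monomial, if_neg]
      intro h
      exact hne (MIdx.toFun_inj (Finsupp.equivFunOnFinite.symm.injective h))
    · simp
  rw [hz, MvPolynomial.coeff_zero] at hc
  rcases mul_eq_zero.1 hc.symm with h | h
  · simpa using h
  · exact absurd h (mul_ne_zero (hcf _) (lc_ne _))

lemma unif_pd {ι : Type*} [Fintype ι] (M : ℝ → ι → ι → ℝ)
    (hc : ∀ i j, Continuous fun s => M s i j)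
    (h0 : ∀ y : ι → ℝ, y ≠ 0 → 0 < ∑ i, ∑ j, y i * M 0 i j * y j) :
    ∃ m > (0 : ℝ), ∃ B > (0 : ℝ), ∃ s₀ > (0 : ℝ), ∀ s, 0 < s → s < s₀ →
      (∀ y : ι → ℝ, m * ∑ i, y i ^ 2 ≤ ∑ i, ∑ j, y i * M s i j * y j) ∧
      (∀ y : ι → ℝ, ∑ i, (∑ j, M s i j * y j) ^ 2 ≤ B * ∑ i, y i ^ 2) := by
  set K : Set (ι → ℝ) := {y | ∑ i, y i ^ 2 = 1} with hK
  have hKc : IsCompact K := by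
    refine Metric.isCompact_of_isClosed_isBounded
      (isClosed_eq (by fun_prop) (by fun_prop)) ?_
    refine (Metric.isBounded_closedBall (x := (0 : ι → ℝ)) (r := 1)).subset fun y hy => ?_
    rw [mem_closedBall_zero_iff, pi_norm_le_iff_of_nonneg zero_le_one]
    intro i
    have h1 : y i ^ 2 ≤ ∑ i, y i ^ 2 :=
      Finset.single_le_sum (f := fun i => y i ^ 2) (fun _ _ => sq_nonneg _) (Finset.mem_univ i)
    rw [hy] at h1
    rw [Real.norm_eq_abs]
    exact (sq_le_one_iff_abs_le_one _).1 h1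
  have hf : Continuous fun z : ℝ × (ι → ℝ) => ∑ i, ∑ j, z.2 i * M z.1 i j * z.2 j := by
    refine continuous_finsetSum _ fun i _ => continuous_finsetSum _ fun j _ => ?_
    have := (hc i j).comp (continuous_fst (X := ℝ) (Y := ι → ℝ))
    exact (((continuous_apply i).comp continuous_snd).mul this).mul
      ((continuous_apply j).comp continuous_snd)
  obtain ⟨a, ha, hbd⟩ := hKc.exists_forall_le' (a := 0)
    (f := fun y : ι → ℝ => ∑ i, ∑ j, y i * M 0 i j * y j)
    ((hf.comp (Continuous.prodMk_right (0 : ℝ))).continuousOn) (fun y hy => h0 y (by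
      rintro rfl
      simp [hK] at hy))
  have hev : ∀ᶠ s in nhds (0 : ℝ), ∀ y ∈ K, a / 2 < ∑ i, ∑ j, y i * M s i j * y j := by
    refine hKc.eventually_forall_of_forall_eventually fun y hy => ?_
    have : a / 2 < ∑ i, ∑ j, y i * M 0 i j * y j := by
      have := hbd y hy; linarith
    exact (hf.continuousAt (x := ((0 : ℝ), y))).eventually (lt_mem_nhds this)
  have hB : Continuous fun s => ∑ i, ∑ j, M s i j ^ 2 :=
    continuous_finsetSum _ fun i _ => continuous_finsetSum _ fun j _ => (hc i j).pow 2
  have hev2 : ∀ᶠ s in nhds (0 : ℝ), ∑ i, ∑ j, M s i j ^ 2 < ∑ i, ∑ j, M 0 i j ^ 2 + 1 :=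
    (hB.continuousAt (x := (0 : ℝ))).eventually (gt_mem_nhds (by simp))
  obtain ⟨s₀, hs₀, hall⟩ := Metric.eventually_nhds_iff.1 (hev.and hev2)
  refine ⟨a / 2, by linarith, ∑ i, ∑ j, M 0 i j ^ 2 + 1, by positivity, s₀, hs₀, ?_⟩
  intro s hs hlt
  obtain ⟨hA, hB'⟩ := hall (y := s) (by rwa [Real.dist_eq, sub_zero, abs_of_pos hs])
  constructor
  · intro y
    set r2 := ∑ i, y i ^ 2 with hr2
    have hr2nn : 0 ≤ r2 := Finset.sum_nonneg fun _ _ => sq_nonneg _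
    rcases hr2nn.eq_or_lt with h | h
    · have hy : ∀ i, y i = 0 := by
        intro i
        have := (Finset.sum_eq_zero_iff_of_nonneg (fun i _ => sq_nonneg (y i))).1 h.symm i
          (Finset.mem_univ i)
        exact pow_eq_zero_iff (two_ne_zero) |>.1 this
      rw [← h]; simp [hy]
    · have hr : √r2 ^ 2 = r2 := Real.sq_sqrt hr2nn
      have hrp : 0 < √r2 := Real.sqrt_pos.2 h
      have hmem : (fun i => y i / √r2) ∈ K := by
        simp only [hK, Set.mem_ofPred_eq, div_pow]
        rw [← Finset.sum_div, hr, ← hr2, div_self h.ne']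
      have h3 := (hA _ hmem).le
      have h4 : ∑ i, ∑ j, (y i / √r2) * M s i j * (y j / √r2)
          = (∑ i, ∑ j, y i * M s i j * y j) / r2 := by
        rw [Finset.sum_div]
        refine Finset.sum_congr rfl fun i _ => ?_
        rw [Finset.sum_div]
        refine Finset.sum_congr rfl fun j _ => ?_
        rw [div_mul_eq_mul_div, div_mul_div_comm, ← sq, hr]
      rw [h4, le_div_iff₀ h] at h3
      exact h3
  · intro y
    calc ∑ i, (∑ j, M s i j * y j) ^ 2
        ≤ ∑ i, (∑ j, M s i j ^ 2) * ∑ j, y j ^ 2 :=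
          Finset.sum_le_sum fun i _ => Finset.sum_mul_sq_le_sq_mul_sq _ _ _
      _ = (∑ i, ∑ j, M s i j ^ 2) * ∑ j, y j ^ 2 := by rw [Finset.sum_mul]
      _ ≤ _ := mul_le_mul_of_nonneg_right hB'.le (Finset.sum_nonneg fun _ _ => sq_nonneg _)

open Matrix in
lemma core {d p : ℕ} (σ : ℝ → ℝ) (cf : Fin (p + 1) → ℝ) (hcf : ∀ k, cf k ≠ 0)
    (hσ : ∀ y, σ y = ∑ k : Fin (p + 1), cf k * y ^ (k : ℕ)) :
    ∃ c₁ > (0 : ℝ), ∃ c₂ > (0 : ℝ), ∃ ε₀ > (0 : ℝ), ε₀ ≤ 1 ∧ ∀ ε, 0 < ε → ε < ε₀ →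
      (PhiMat d p σ ε).PosDef ∧ ∀ v : MIdx d p → ℝ,
        c₁ * ∑ T, v T ^ 2 / ε ^ (∑ i, T.toFun i) ≤ v ⬝ᵥ ((PhiMat d p σ ε)⁻¹ *ᵥ v) ∧
        v ⬝ᵥ ((PhiMat d p σ ε)⁻¹ *ᵥ v) ≤ c₂ * ∑ T, v T ^ 2 / ε ^ (∑ i, T.toFun i) := by
  obtain ⟨m, hm, B, hB, s₀, hs₀, hall⟩ := unif_pd (fun s => Mm d p cf s)
    (Mm_cont d p cf) (Mm_zero_form cf hcf)
  refine ⟨m / B, by positivity, 1 / m, by positivity, min (s₀ ^ 2) 1, by positivity,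
    min_le_right _ _, ?_⟩
  intro ε hε hlt
  obtain ⟨s, hs, rfl⟩ : ∃ s : ℝ, 0 < s ∧ s ^ 2 = ε := ⟨√ε, Real.sqrt_pos.2 hε, Real.sq_sqrt hε.le⟩
  have hss : s < s₀ := lt_of_pow_lt_pow_left₀ 2 hs₀.le (hlt.trans_le (min_le_left _ _))
  obtain ⟨hA, hBd⟩ := hall s hs hss
  set Φ := PhiMat d p σ (s ^ 2) with hΦ
  have hent : ∀ T T', Φ T T' =
      s ^ (∑ i, T.toFun i) * s ^ (∑ i, T'.toFun i) * Mm d p cf s T T' :=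
    PhiMat_eq σ cf hσ s
  have hform : ∀ x : MIdx d p → ℝ, x ⬝ᵥ (Φ *ᵥ x) = ∑ T, ∑ T',
      (s ^ (∑ i, T.toFun i) * x T) * Mm d p cf s T T' * (s ^ (∑ i, T'.toFun i) * x T') := by
    intro x
    simp only [dotProduct, mulVec, Finset.mul_sum, hent]
    refine Finset.sum_congr rfl fun T _ => Finset.sum_congr rfl fun T' _ => ?_
    ring
  have hPD : Φ.PosDef := by
    refine Matrix.PosDef.of_dotProduct_mulVec_pos ?_ ?_
    · ext T T'
      simp only [conjTranspose_apply, star_trivial, hent]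
      rw [Mm_symm]; ring
    · intro x hx
      simp only [star_trivial]
      rw [hform]
      refine lt_of_lt_of_le (mul_pos hm ?_) (hA _)
      obtain ⟨T, hT⟩ := Function.ne_iff.1 hx
      refine Finset.sum_pos' (fun _ _ => sq_nonneg _) ⟨T, Finset.mem_univ T, ?_⟩
      have : x T ≠ 0 := hT
      positivity
  refine ⟨hPD, fun v => ?_⟩
  set x := Φ⁻¹ *ᵥ v with hx
  have hv : Φ *ᵥ x = v := by
    rw [hx, mulVec_mulVec, Matrix.mul_nonsing_inv _ (hPD.isUnit.map Matrix.detMonoidHom),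
      one_mulVec]
  set y : MIdx d p → ℝ := fun T => s ^ (∑ i, T.toFun i) * x T with hy
  have hz : ∀ T, v T = s ^ (∑ i, T.toFun i) * ∑ T', Mm d p cf s T T' * y T' := by
    intro T
    conv_lhs => rw [← hv]
    simp only [dotProduct, mulVec, Finset.mul_sum, hent, hy]
    refine Finset.sum_congr rfl fun T' _ => ?_
    ring
  set z : MIdx d p → ℝ := fun T => ∑ T', Mm d p cf s T T' * y T' with hzdef
  have hzsum : ∑ T, v T ^ 2 / (s ^ 2) ^ (∑ i, T.toFun i) = ∑ T, z T ^ 2 := by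
    refine Finset.sum_congr rfl fun T _ => ?_
    rw [hz T, mul_pow, ← pow_mul, ← pow_mul, mul_comm 2, mul_div_cancel_left₀ _ (by positivity)]
  have hq : v ⬝ᵥ x = ∑ T, z T * y T := by
    simp only [dotProduct]
    refine Finset.sum_congr rfl fun T _ => ?_
    rw [hz T]; simp only [hy]; ring
  have hq2 : v ⬝ᵥ x = ∑ T, ∑ T', y T * Mm d p cf s T T' * y T' := by
    rw [hq]
    refine Finset.sum_congr rfl fun T _ => ?_
    simp only [hzdef, Finset.sum_mul]
    refine Finset.sum_congr rfl fun T' _ => ?_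
    ring
  have e1 : m * ∑ T, y T ^ 2 ≤ v ⬝ᵥ x := hq2 ▸ hA y
  have e2 : ∑ T, z T ^ 2 ≤ B * ∑ T, y T ^ 2 := hBd y
  have e3 : (v ⬝ᵥ x) ^ 2 ≤ (∑ T, z T ^ 2) * ∑ T, y T ^ 2 := by
    rw [hq]; exact Finset.sum_mul_sq_le_sq_mul_sq _ _ _
  have hyn : 0 ≤ ∑ T, y T ^ 2 := Finset.sum_nonneg fun _ _ => sq_nonneg _
  have hzn : 0 ≤ ∑ T, z T ^ 2 := Finset.sum_nonneg fun _ _ => sq_nonneg _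
  rw [hzsum]
  constructor
  · rw [div_mul_eq_mul_div, div_le_iff₀ hB]
    nlinarith
  · rw [div_mul_eq_mul_div, one_mul, le_div_iff₀ hm]
    have hqn : 0 ≤ v ⬝ᵥ x := le_trans (by positivity) e1
    rcases hqn.eq_or_lt with h | h
    · rw [← h]; simpa using hzn
    · have : (v ⬝ᵥ x) * (v ⬝ᵥ x * m) ≤ (v ⬝ᵥ x) * ∑ T, z T ^ 2 := by nlinarith
      exact le_of_mul_le_mul_left this h

lemma hco_lt {d : ℕ} (T : Fin d → ℕ) (G : MvPolynomial (Fin d) ℝ)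
    (h : G.totalDegree < ∑ i, T i) : hco T G = 0 := by
  rw [hco_eq]
  refine Finset.sum_eq_zero fun S hS => ?_
  have h1 := MvPolynomial.le_totalDegree hS
  rw [Finsupp.sum_fintype _ _ (by simp)] at h1
  rw [prod_mom_zero, mul_zero]
  · omega
  · intro hh; rw [← hh] at h; omega

/-- directions of `interpPolys` -/
noncomputable def dirs (d p : ℕ) (U : Set (Fin d → ℝ)) : Submodule ℝ (MvPolynomial (Fin d) ℝ) where
  carrier := {G | G.totalDegree ≤ p ∧ ∀ x ∈ Uᶜ, MvPolynomial.eval x G = 0}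
  add_mem' := by
    rintro a b ⟨ha, ha'⟩ ⟨hb, hb'⟩
    exact ⟨(MvPolynomial.totalDegree_add _ _).trans (max_le ha hb), fun x hx => by
      rw [map_add, ha' x hx, hb' x hx, add_zero]⟩
  zero_mem' := ⟨by simp, by simp⟩
  smul_mem' := by
    rintro c a ⟨ha, ha'⟩
    exact ⟨(MvPolynomial.totalDegree_smul_le _ _).trans ha, fun x hx => by
      rw [MvPolynomial.smul_eval, ha' x hx, mul_zero]⟩

lemma mem_interp_iff {d p : ℕ} {U : Set (Fin d → ℝ)} {F : MvPolynomial (Fin d) ℝ}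
    (hF : F.totalDegree ≤ p) (G : MvPolynomial (Fin d) ℝ) :
    G ∈ interpPolys d p U F ↔ G - F ∈ dirs d p U := by
  constructor
  · rintro ⟨h1, h2⟩
    exact ⟨(MvPolynomial.totalDegree_sub _ _).trans (max_le h1 hF), fun x hx => by
      rw [map_sub, h2 x hx, sub_self]⟩
  · rintro ⟨h1, h2⟩
    refine ⟨?_, fun x hx => ?_⟩
    · have : G = (G - F) + F := by ring
      rw [this]
      exact (MvPolynomial.totalDegree_add _ _).trans (max_le h1 hF)
    · have := h2 x hx
      rwa [map_sub, sub_eq_zero] at this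

/-- Hermite vector as a linear map -/
noncomputable def hvL (d p : ℕ) : MvPolynomial (Fin d) ℝ →ₗ[ℝ] (MIdx d p → ℝ) :=
  LinearMap.pi fun T => hco T.toFun

lemma hermVec_hvL {d p : ℕ} (G : MvPolynomial (Fin d) ℝ) : hermVec d p G = hvL d p G := rfl

open Matrix in
lemma exists_min {d p : ℕ} {U : Set (Fin d → ℝ)} {F : MvPolynomial (Fin d) ℝ}
    (hF : F.totalDegree ≤ p) (σ : ℝ → ℝ) (ε c : ℝ) (hc : 0 < c)
    (hlow : ∀ v : MIdx d p → ℝ, c * ∑ T, v T ^ 2 ≤ v ⬝ᵥ ((PhiMat d p σ ε)⁻¹ *ᵥ v)) :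
    ∃ G ∈ interpPolys d p U F,
        (∀ G' ∈ interpPolys d p U F, quadForm d p σ ε G ≤ quadForm d p σ ε G') ∧
        ∀ G'' ∈ interpPolys d p U F,
          (∀ G' ∈ interpPolys d p U F, quadForm d p σ ε G'' ≤ quadForm d p σ ε G') →
          G'' = G := by
  set A := (PhiMat d p σ ε)⁻¹ with hA
  set q : (MIdx d p → ℝ) → ℝ := fun v => v ⬝ᵥ (A *ᵥ v) with hq
  have hquad : ∀ G, quadForm d p σ ε G = q (hvL d p G) := fun G => rfl
  have hqc : Continuous q := by
    simp only [hq, dotProduct, mulVec]; fun_prop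
  set W := (dirs d p U).map (hvL d p) with hW
  set s : Set (MIdx d p → ℝ) := {v | v - hvL d p F ∈ W} with hs
  have hsc : IsClosed s :=
    (Submodule.closed_of_finiteDimensional W).preimage
      (continuous_id.sub continuous_const : Continuous fun v => v - hvL d p F)
  have hmem : ∀ G ∈ interpPolys d p U F, hvL d p G ∈ s := by
    intro G hG
    refine ⟨G - F, (mem_interp_iff hF G).1 hG, by simp⟩
  have hmem' : ∀ v ∈ s, ∃ G ∈ interpPolys d p U F, hvL d p G = v := by
    rintro v ⟨H, hH, hHv⟩
    refine ⟨H + F, (mem_interp_iff hF _).2 (by simpa using hH), ?_⟩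
    rw [map_add, hHv]; simp
  have hFm : F ∈ interpPolys d p U F := ⟨hF, fun _ _ => rfl⟩
  have htend : Filter.Tendsto q (Filter.cocompact _) Filter.atTop := by
    have h1 : Filter.Tendsto (fun v : MIdx d p → ℝ => c * ‖v‖ ^ 2) (Filter.cocompact _)
        Filter.atTop :=
      Filter.Tendsto.const_mul_atTop hc
        ((Filter.tendsto_pow_atTop two_ne_zero).comp (tendsto_norm_cocompact_atTop))
    refine Filter.tendsto_atTop_mono (fun v => ?_) h1
    refine le_trans (mul_le_mul_of_nonneg_left ?_ hc.le) (hlow v)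
    have hnn : 0 ≤ ∑ T, v T ^ 2 := Finset.sum_nonneg fun _ _ => sq_nonneg _
    have : ‖v‖ ≤ √(∑ T, v T ^ 2) := by
      rw [pi_norm_le_iff_of_nonneg (Real.sqrt_nonneg _)]
      intro T
      rw [Real.norm_eq_abs]
      exact Real.abs_le_sqrt (Finset.single_le_sum (f := fun i => v i ^ 2)
        (fun _ _ => sq_nonneg _) (Finset.mem_univ T))
    calc ‖v‖ ^ 2 ≤ √(∑ T, v T ^ 2) ^ 2 := by gcongr
      _ = _ := Real.sq_sqrt hnn
  obtain ⟨v, hv, hmin⟩ := hqc.continuousOn.exists_isMinOn' hsc (hmem F hFm)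
    ((htend.eventually (Filter.eventually_ge_atTop (q (hvL d p F)))).filter_mono inf_le_left)
  obtain ⟨G, hG, rfl⟩ := hmem' v hv
  have hGmin : ∀ G' ∈ interpPolys d p U F, quadForm d p σ ε G ≤ quadForm d p σ ε G' :=
    fun G' hG' => hmin (hmem G' hG')
  refine ⟨G, hG, hGmin, fun G2 hG2 hmin2 => ?_⟩
  have hmid : (1 / 2 : ℝ) • G + (1 / 2 : ℝ) • G2 ∈ interpPolys d p U F := by
    rw [mem_interp_iff hF] at hG hG2 ⊢
    have : (1 / 2 : ℝ) • G + (1 / 2 : ℝ) • G2 - F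
        = (1 / 2 : ℝ) • (G - F) + (1 / 2 : ℝ) • (G2 - F) := by module
    rw [this]
    exact Submodule.add_mem _ (Submodule.smul_mem _ _ hG) (Submodule.smul_mem _ _ hG2)
  have e1 := hGmin _ hmid
  have e2 := hmin2 _ hG
  have e3 := hGmin _ hG2
  rw [hquad, hquad] at e1 e2 e3
  have par : ∀ a b, q ((1 / 2 : ℝ) • a + (1 / 2 : ℝ) • b) = q a / 2 + q b / 2 - q (b - a) / 4 := by
    intro a b
    simp only [hq, mulVec_add, mulVec_sub, mulVec_smul, dotProduct_add, dotProduct_sub,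
      add_dotProduct, sub_dotProduct, smul_dotProduct, dotProduct_smul, smul_eq_mul]
    ring
  rw [map_add, map_smul, map_smul, par] at e1
  have e4 : q (hvL d p G2 - hvL d p G) ≤ 0 := by linarith
  have e5 := (hlow _).trans e4
  have e6 : ∑ T, (hvL d p G2 - hvL d p G) T ^ 2 = 0 :=
    le_antisymm (by nlinarith) (Finset.sum_nonneg fun _ _ => sq_nonneg _)
  rw [← sub_eq_zero]
  refine hco_inj (p := p) _ ((MvPolynomial.totalDegree_sub _ _).trans (max_le hG2.1 hG.1)) ?_
  intro T
  have := (Finset.sum_eq_zero_iff_of_nonneg (fun _ _ => sq_nonneg _)).1 e6 T (Finset.mem_univ T)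
  have h7 := pow_eq_zero_iff (two_ne_zero) |>.1 this
  rw [map_sub]; exact h7

lemma main_bound {d p : ℕ} (σ : ℝ → ℝ) (cf : Fin (p + 1) → ℝ) (hcf : ∀ k, cf k ≠ 0)
    (hσ : ∀ y, σ y = ∑ k : Fin (p + 1), cf k * y ^ (k : ℕ))
    (F : MvPolynomial (Fin d) ℝ) (hF : F.totalDegree ≤ p) (U : Set (Fin d → ℝ)) :
    ∃ C > (0 : ℝ), ∃ ε₀ > (0 : ℝ), ε₀ ≤ 1 ∧ ∀ ε : ℝ, 0 < ε → ε < ε₀ →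
      (PhiMat d p σ ε).PosDef ∧
      (∃ G ∈ interpPolys d p U F,
        (∀ G' ∈ interpPolys d p U F, quadForm d p σ ε G ≤ quadForm d p σ ε G') ∧
        ∀ G'' ∈ interpPolys d p U F,
          (∀ G' ∈ interpPolys d p U F, quadForm d p σ ε G'' ≤ quadForm d p σ ε G') →
          G'' = G) ∧
      (∀ G ∈ interpPolys d p U F,
        (∀ G' ∈ interpPolys d p U F, quadForm d p σ ε G ≤ quadForm d p σ ε G') →
        ∑ T : MIdx d p, hco T.toFun G ^ 2 / ε ^ (∑ i, T.toFun i)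
          ≤ C / ε ^ (minInterpDeg d p U F)) := by
  obtain ⟨c₁, hc₁, c₂, hc₂, ε₀, hε₀, hε₀1, hall⟩ := core (d := d) σ cf hcf hσ
  obtain ⟨Gs, hGs, hdeg⟩ : ∃ G ∈ interpPolys d p U F, G.totalDegree = minInterpDeg d p U F :=
    Nat.sInf_mem (s := {k : ℕ | ∃ G ∈ interpPolys d p U F, G.totalDegree = k})
      ⟨_, F, ⟨hF, fun _ _ => rfl⟩, rfl⟩
  set ps := minInterpDeg d p U F with hps
  set K := ∑ T : MIdx d p, hco T.toFun Gs ^ 2 with hK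
  have hKn : 0 ≤ K := Finset.sum_nonneg fun _ _ => sq_nonneg _
  refine ⟨c₂ * K / c₁ + 1, by positivity, ε₀, hε₀, hε₀1, fun ε hε hlt => ?_⟩
  obtain ⟨hPD, hb⟩ := hall ε hε hlt
  have hε1 : ε ≤ 1 := by linarith
  refine ⟨hPD, ?_, ?_⟩
  · refine exists_min hF σ ε c₁ hc₁ fun v => le_trans ?_ (hb v).1
    refine mul_le_mul_of_nonneg_left (Finset.sum_le_sum fun T _ => ?_) hc₁.le
    exact le_div_self (sq_nonneg _) (by positivity) (pow_le_one₀ hε.le hε1)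
  · intro G hG hmin
    have h1 := (hb (hermVec d p G)).1
    have h2 := hmin Gs hGs
    have h3 := (hb (hermVec d p Gs)).2
    have h4 : ∑ T : MIdx d p, hermVec d p Gs T ^ 2 / ε ^ (∑ i, T.toFun i) ≤ K / ε ^ ps := by
      rw [hK, Finset.sum_div]
      refine Finset.sum_le_sum fun T _ => ?_
      rw [hermVec_eq]
      by_cases h : ps < ∑ i, T.toFun i
      · rw [hco_lt _ _ (by omega)]; simp
      · exact div_le_div_of_nonneg_left (sq_nonneg _) (by positivity)
          (pow_le_pow_of_le_one hε.le hε1 (not_lt.1 h))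
    have h5 : c₁ * ∑ T : MIdx d p, hermVec d p G T ^ 2 / ε ^ (∑ i, T.toFun i)
        ≤ c₂ * (K / ε ^ ps) :=
      h1.trans (h2.trans (h3.trans (mul_le_mul_of_nonneg_left h4 hc₂.le)))
    have h6 : ∑ T : MIdx d p, hermVec d p G T ^ 2 / ε ^ (∑ i, T.toFun i)
        ≤ c₂ * (K / ε ^ ps) / c₁ := by
      rw [le_div_iff₀ hc₁]; linarith
    refine h6.trans ?_
    have : c₂ * (K / ε ^ ps) / c₁ = (c₂ * K / c₁) / ε ^ ps := by ring
    rw [this]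
    gcongr
    linarith

lemma sum_MIdx {d p : ℕ} (f : (Fin d → Fin (p + 1)) → ℝ)
    (h : ∀ T, p < ∑ i, (T i : ℕ) → f T = 0) : ∑ T, f T = ∑ T : MIdx d p, f T.1 := by
  rw [← Finset.sum_subtype (Finset.univ.filter fun T : Fin d → Fin (p + 1) =>
    (∑ i, (T i : ℕ)) ≤ p) (by simp) f]
  symm
  refine Finset.sum_subset (Finset.subset_univ _) fun T _ hT => h T ?_
  simpa using hT

/-- under Assumption A, there are `C > 0` and `ε₀ > 0` such that for all
`ε ∈ (0, ε₀)`: `Φ(ε)` is positive definite, the minimizer `g_ε` of `ĝᵀ Φ(ε)⁻¹ ĝ`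
over `F_int` exists and is unique, and every minimizer satisfies, for all
`p* < k ≤ p`, `Σ_{|T| = k} ⟨g_ε, χ_T⟩² ≤ C ε^{k − p*}`.  In particular, the
`L²(γ_d)`-distance from `g_ε` to `Π_{p*}(ℝ^d)` tends to `0` as `ε → 0`. -/
theorem stmt1 (d p : ℕ) (hd : 1 ≤ d) (hp : 1 ≤ p)
    (σ : ℝ → ℝ) (cf : Fin (p + 1) → ℝ) (hcf : ∀ k, cf k ≠ 0)
    (hσ : ∀ y, σ y = ∑ k : Fin (p + 1), cf k * y ^ (k : ℕ))
    (F : MvPolynomial (Fin d) ℝ) (hF : F.totalDegree ≤ p)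
    (U : Set (Fin d → ℝ)) (hU : U ≠ Set.univ) :
    (∃ C > (0 : ℝ), ∃ ε₀ > (0 : ℝ), ∀ ε : ℝ, 0 < ε → ε < ε₀ →
      (PhiMat d p σ ε).PosDef ∧
      (∃ G ∈ interpPolys d p U F,
        (∀ G' ∈ interpPolys d p U F, quadForm d p σ ε G ≤ quadForm d p σ ε G') ∧
        ∀ G'' ∈ interpPolys d p U F,
          (∀ G' ∈ interpPolys d p U F, quadForm d p σ ε G'' ≤ quadForm d p σ ε G') →
          G'' = G) ∧
      (∀ G ∈ interpPolys d p U F,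
        (∀ G' ∈ interpPolys d p U F, quadForm d p σ ε G ≤ quadForm d p σ ε G') →
        ∀ k : ℕ, minInterpDeg d p U F < k → k ≤ p →
          (∑ T : Fin d → Fin (p + 1),
              if (∑ i, (T i : ℕ)) = k then
                (∫ x, MvPolynomial.eval x G *
                    chiH (fun i => (T i : ℕ)) x ∂(gaussD d)) ^ 2
              else 0)
            ≤ C * ε ^ (k - minInterpDeg d p U F))) ∧
    (∀ δ : ℝ, 0 < δ → ∃ ε₁ > (0 : ℝ), ∀ ε : ℝ, 0 < ε → ε < ε₁ →
      ∀ G ∈ interpPolys d p U F,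
        (∀ G' ∈ interpPolys d p U F, quadForm d p σ ε G ≤ quadForm d p σ ε G') →
        ∃ h : MvPolynomial (Fin d) ℝ, h.totalDegree ≤ minInterpDeg d p U F ∧
          Real.sqrt (∫ x, (MvPolynomial.eval x G - MvPolynomial.eval x h) ^ 2
              ∂(gaussD d)) ≤ δ) := by
  obtain ⟨C, hC, ε₀, hε₀, hε₀1, hall⟩ := main_bound σ cf hcf hσ F hF U
  set ps := minInterpDeg d p U F with hps
  refine ⟨⟨C, hC, ε₀, hε₀, fun ε hε hlt => ?_⟩, ?_⟩
  · obtain ⟨h1, h2, h3⟩ := hall ε hε hlt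
    refine ⟨h1, h2, fun G hG hmin k hk hkp => ?_⟩
    have h4 := h3 G hG hmin
    have h5 : (∑ T : Fin d → Fin (p + 1),
              if (∑ i, (T i : ℕ)) = k then
                (∫ x, MvPolynomial.eval x G *
                    chiH (fun i => (T i : ℕ)) x ∂(gaussD d)) ^ 2
              else 0) = ∑ T : MIdx d p, if (∑ i, T.toFun i) = k then
                hco T.toFun G ^ 2 else 0 := by
      rw [sum_MIdx]
      · rfl
      · intro T hT
        rw [if_neg]
        omega
    rw [h5]
    have h6 : (∑ T : MIdx d p, if (∑ i, T.toFun i) = k then hco T.toFun G ^ 2 else 0) / ε ^ k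
        ≤ C / ε ^ ps := by
      refine le_trans ?_ h4
      rw [Finset.sum_div]
      refine Finset.sum_le_sum fun T _ => ?_
      split_ifs with h
      · rw [h]
      · rw [zero_div]; positivity
    rw [div_le_iff₀ (by positivity)] at h6
    refine h6.trans (le_of_eq ?_)
    have : ε ^ k = ε ^ ps * ε ^ (k - ps) := by rw [← pow_add]; congr 1; omega
    rw [this]
    field_simp
  · intro δ hδ
    refine ⟨min ε₀ (δ ^ 2 / C), by positivity, fun ε hε hlt G hG hmin => ?_⟩
    have hlt1 : ε < ε₀ := hlt.trans_le (min_le_left _ _)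
    have hlt2 : ε * C < δ ^ 2 := by
      have := hlt.trans_le (min_le_right _ _)
      rwa [lt_div_iff₀ hC] at this
    have h4 := (hall ε hε hlt1).2.2 G hG hmin
    refine ⟨∑ T : MIdx d p, (if (∑ i, T.toFun i) ≤ ps then hco T.toFun G else 0) •
      chiP T.toFun, ?_, ?_⟩
    · refine (MvPolynomial.totalDegree_finsetSum _ _).trans (Finset.sup_le fun T _ => ?_)
      split_ifs with h
      · exact (MvPolynomial.totalDegree_smul_le _ _).trans ((chiP_deg _).trans h)
      · simp
    · have h5 : G - ∑ T : MIdx d p, (if (∑ i, T.toFun i) ≤ ps then hco T.toFun G else 0) •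
          chiP T.toFun = ∑ T : MIdx d p, (if (∑ i, T.toFun i) ≤ ps then 0 else hco T.toFun G) •
          chiP T.toFun := by
        rw [sub_eq_iff_eq_add, ← Finset.sum_add_distrib]
        refine (expand G hG.1).trans ?_
        refine Finset.sum_congr rfl fun T _ => ?_
        split_ifs <;> simp
      simp_rw [← map_sub]
      rw [h5, int_sq_sum]
      refine Real.sqrt_le_iff.2 ⟨hδ.le, le_trans ?_ hlt2.le⟩
      have h6 : (∑ T : MIdx d p, (if (∑ i, T.toFun i) ≤ ps then 0 else hco T.toFun G) ^ 2)
          / ε ^ (ps + 1) ≤ C / ε ^ ps := by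
        refine le_trans ?_ h4
        rw [Finset.sum_div]
        refine Finset.sum_le_sum fun T _ => ?_
        split_ifs with h
        · rw [zero_pow two_ne_zero, zero_div]; positivity
        · exact div_le_div_of_nonneg_left (sq_nonneg _) (by positivity)
            (pow_le_pow_of_le_one hε.le (by linarith) (by omega))
      rw [div_le_iff₀ (by positivity)] at h6
      refine h6.trans (le_of_eq ?_)
      rw [pow_succ]
      field_simp
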